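/- arXiv:2302.07066 — 6 statements merged into one kernel-verified Lean document; each statement's English description precedes it below -/
import Mathlib

section
/- Let f : [0,1] → ℝ be quasi-continuous at every point of [0,1]. Then for every x ∈ [0,1] and every m ∈ ℕ, the following are equivalent: (i) there exists N ∈ ℕ such that |f(q) - f(r)| ≤ 2^{-m} for all rationals q, r ∈ [0,1] with |q - x| < 2^{-N} and |r - x| < 2^{-N}; (ii) there exists N ∈ ℕ such that |f(w) - f(z)| ≤ 2^{-m} for all w, z ∈ [0,1] with |w - x| < 2^{-N} and |z - x| < 2^{-N}. -/
/-- `f` is quasi-continuous at `x₀ ∈ [0,1]`: for every `ε > 0` and every set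
`U ⊆ [0,1]` containing `x₀` that is open in the subspace topology of `[0,1]`,
there is a nonempty set `G ⊆ U`, open in the subspace topology of `[0,1]`,
with `|f x - f x₀| < ε` for all `x ∈ G`. -/
def QuasiContinuousAt (f : ℝ → ℝ) (x₀ : ℝ) : Prop :=
  ∀ ε > (0:ℝ), ∀ U : Set ℝ, U ⊆ Set.Icc 0 1 → x₀ ∈ U →
    IsOpen (Subtype.val ⁻¹' U : Set (Set.Icc (0:ℝ) 1)) →
    ∃ G : Set ℝ, G.Nonempty ∧ G ⊆ U ∧
      IsOpen (Subtype.val ⁻¹' G : Set (Set.Icc (0:ℝ) 1)) ∧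
      ∀ x ∈ G, |f x - f x₀| < ε

/-!
Every value of a quasi-continuous function on `s` is a cluster value along any dense subset `t`
of `s`. So for open `U` the set `f '' (t ∩ U)` is dense in `f '' (s ∩ U)`, and a closed condition
such as `dist · · ≤ c` passes from the former to the latter.
-/

open Set Filter Topology

section General

variable {X Y : Type*} [TopologicalSpace X]

/-- Quasi-continuity at `x` of the restriction of `f` to the subspace `s`, for `x ∈ s`: arbitrarily
close to `x` there are points of `s` around which `f` maps a neighbourhood in `s` into a prescribed
neighbourhood of `f x`. The nonempty open set of the usual definition is encoded by
"frequently, eventually". -/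
def QuasiContinuousWithinAt [TopologicalSpace Y] (f : X → Y) (s : Set X) (x : X) : Prop :=
  ∀ V ∈ 𝓝 (f x), ∃ᶠ y in 𝓝[s] x, ∀ᶠ z in 𝓝[s] y, f z ∈ V

theorem QuasiContinuousWithinAt.mapClusterPt [TopologicalSpace Y] {f : X → Y} {s t : Set X} {x : X}
    (hf : QuasiContinuousWithinAt f s x) (hts : t ⊆ s) (hst : s ⊆ closure t) :
    MapClusterPt (f x) (𝓝[t] x) f := by
  refine mapClusterPt_iff_frequently.2 fun V hV => ?_
  rw [frequently_nhdsWithin_iff, ← frequently_frequently_nhds]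
  refine (frequently_nhdsWithin_iff.1 (hf V hV)).mono fun y ⟨hyV, hys⟩ => ?_
  have : (𝓝[t] y).NeBot := mem_closure_iff_nhdsWithin_neBot.1 (hst hys)
  exact frequently_nhdsWithin_iff.1 (hyV.filter_mono (nhdsWithin_mono y hts)).frequently

theorem image_inter_subset_closure_of_quasiContinuousWithinAt [TopologicalSpace Y]
    {f : X → Y} {s t U : Set X}
    (hf : ∀ x ∈ s, QuasiContinuousWithinAt f s x) (hts : t ⊆ s) (hst : s ⊆ closure t)
    (hU : IsOpen U) : f '' (s ∩ U) ⊆ closure (f '' (t ∩ U)) := by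
  rintro _ ⟨x, ⟨hxs, hxU⟩, rfl⟩
  have hmem : t ∩ U ∈ 𝓝[t] x :=
    inter_mem self_mem_nhdsWithin (mem_nhdsWithin_of_mem_nhds (hU.mem_nhds hxU))
  exact mem_closure_iff_clusterPt.2 <|
    ((hf x hxs).mapClusterPt hts hst).clusterPt.mono (le_principal_iff.2 (image_mem_map hmem))

theorem dist_le_of_mem_closure [PseudoMetricSpace Y] {A : Set Y} {c : ℝ}
    (hA : ∀ a ∈ A, ∀ b ∈ A, dist a b ≤ c) {a b : Y} (ha : a ∈ closure A) (hb : b ∈ closure A) :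
    dist a b ≤ c :=
  isClosed_Iic.closure_subset (map_mem_closure₂ continuous_dist ha hb hA)

theorem subset_closure_inter_of_dense {s D : Set X} (hs : s ⊆ closure (interior s))
    (hD : Dense D) : s ⊆ closure (s ∩ D) := by
  have hint : interior s ⊆ closure (s ∩ D) :=
    (hD.open_subset_closure_inter isOpen_interior).trans
      (closure_mono (inter_subset_inter_left D interior_subset))
  exact hs.trans (closure_minimal hint isClosed_closure)

theorem quasi_continuous_rational_oscillation_equiv_general {ι : Type*} [PseudoMetricSpace Y]
    {f : X → Y} {s U : Set X} {e : ι → X} (hf : ∀ x ∈ s, QuasiContinuousWithinAt f s x)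
    (he : s ⊆ closure (s ∩ range e)) (hU : IsOpen U) (c : ℝ) :
    (∀ i j, e i ∈ s → e j ∈ s → e i ∈ U → e j ∈ U → dist (f (e i)) (f (e j)) ≤ c) ↔
      ∀ w ∈ s, ∀ z ∈ s, w ∈ U → z ∈ U → dist (f w) (f z) ≤ c := by
  refine ⟨fun h w hw z hz hwU hzU => ?_, fun h i j hi hj => h (e i) hi (e j) hj⟩
  have himage : ∀ a ∈ f '' (s ∩ range e ∩ U), ∀ b ∈ f '' (s ∩ range e ∩ U), dist a b ≤ c := by
    rintro _ ⟨_, ⟨⟨hi, i, rfl⟩, hiU⟩, rfl⟩ _ ⟨_, ⟨⟨hj, j, rfl⟩, hjU⟩, rfl⟩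
    exact h i j hi hj hiU hjU
  have hsub := image_inter_subset_closure_of_quasiContinuousWithinAt hf inter_subset_left he hU
  exact dist_le_of_mem_closure himage (hsub ⟨w, ⟨hw, hwU⟩, rfl⟩) (hsub ⟨z, ⟨hz, hzU⟩, rfl⟩)

end General

theorem Icc_subset_closure_inter_range_ratCast {a b : ℝ} (hab : a ≠ b) :
    Icc a b ⊆ closure (Icc a b ∩ range ((↑) : ℚ → ℝ)) :=
  subset_closure_inter_of_dense (closure_interior_Icc hab).ge Rat.denseRange_cast

theorem QuasiContinuousAt.quasiContinuousWithinAt {f : ℝ → ℝ} {x : ℝ} (hf : QuasiContinuousAt f x)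
    (hx : x ∈ Icc (0 : ℝ) 1) : QuasiContinuousWithinAt f (Icc 0 1) x := by
  intro V hV
  obtain ⟨ε, hε, hεV⟩ := Metric.mem_nhds_iff.1 hV
  refine frequently_nhdsWithin_iff.2 <| frequently_iff.2 fun {W} hW => ?_
  obtain ⟨U, hUW, hU, hxU⟩ := mem_nhds_iff.1 hW
  have hUopen : IsOpen (Subtype.val ⁻¹' (Icc 0 1 ∩ U) : Set (Icc (0 : ℝ) 1)) := by
    simpa only [Subtype.preimage_coe_self_inter] using hU.preimage continuous_subtype_val
  obtain ⟨G, ⟨y, hyG⟩, hGU, hG, hfG⟩ := hf ε hε _ inter_subset_left ⟨hx, hxU⟩ hUopen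
  obtain ⟨hy, hyU⟩ := hGU hyG
  have hGy : G ∈ 𝓝[Icc 0 1] y :=
    preimage_coe_mem_nhds_subtype (a := ⟨y, hy⟩).1 (hG.mem_nhds hyG)
  exact ⟨y, hUW hyU, mem_of_superset hGy fun z hz => hεV (hfG z hz), hy⟩

theorem quasi_continuous_rational_oscillation_equiv
    (f : ℝ → ℝ) (hf : ∀ x ∈ Set.Icc (0:ℝ) 1, QuasiContinuousAt f x) :
    ∀ x ∈ Set.Icc (0:ℝ) 1, ∀ m : ℕ,
      ((∃ N : ℕ, ∀ q r : ℚ, (q:ℝ) ∈ Set.Icc (0:ℝ) 1 → (r:ℝ) ∈ Set.Icc (0:ℝ) 1 →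
          |(q:ℝ) - x| < (2:ℝ) ^ (-(N:ℤ)) → |(r:ℝ) - x| < (2:ℝ) ^ (-(N:ℤ)) →
          |f q - f r| ≤ (2:ℝ) ^ (-(m:ℤ))) ↔
       (∃ N : ℕ, ∀ w ∈ Set.Icc (0:ℝ) 1, ∀ z ∈ Set.Icc (0:ℝ) 1,
          |w - x| < (2:ℝ) ^ (-(N:ℤ)) → |z - x| < (2:ℝ) ^ (-(N:ℤ)) →
          |f w - f z| ≤ (2:ℝ) ^ (-(m:ℤ)))) := by
  intro x _ m
  exact exists_congr fun N => quasi_continuous_rational_oscillation_equiv_general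
    (fun y hy => (hf y hy).quasiContinuousWithinAt hy)
    (Icc_subset_closure_inter_range_ratCast zero_ne_one) Metric.isOpen_ball _
end

section
/- Let f : [0,1] → ℝ be quasi-continuous at every point of [0,1]. Then there exists x ∈ [0,1] at which f is continuous relative to [0,1] (i.e., ContinuousWithinAt f [0,1] x). -/
/-!
Near a point of quasi-continuity there are nonempty open sets on which `f` oscillates as little as
we like. So if such points are dense, then for each entourage `V` the open set of points where the
oscillation of `f` is at most `V` is dense. Countably many entourages suffice to test continuity,
hence `f` is continuous on a residual set, which is dense by the Baire category theorem.
-/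

open Filter Set Topology Uniformity

/-- Quasi-continuity (in the sense of Kempisty) of a map between topological spaces at a point.
That every open `U ∋ x` contains a nonempty open set mapped by `f` into a given neighbourhood `V` of
`f x` is encoded as membership of `x` in the closure of the interior of `f ⁻¹' V`. -/
def IsQuasiContinuousAt {X Y : Type*} [TopologicalSpace X] [TopologicalSpace Y] (f : X → Y)
    (x : X) : Prop :=
  ∀ V ∈ 𝓝 (f x), x ∈ closure (interior (f ⁻¹' V))

theorem isQuasiContinuousAt_iff_dist {X Y : Type*} [TopologicalSpace X] [PseudoMetricSpace Y]
    {f : X → Y} {x : X} :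
    IsQuasiContinuousAt f x ↔ ∀ ε > 0, ∀ U : Set X, IsOpen U → x ∈ U →
      ∃ G : Set X, G.Nonempty ∧ G ⊆ U ∧ IsOpen G ∧ ∀ y ∈ G, dist (f y) (f x) < ε := by
  constructor
  · intro hf ε hε U hU hxU
    have hx := hf _ (Metric.ball_mem_nhds (f x) hε)
    exact ⟨U ∩ interior (f ⁻¹' Metric.ball (f x) ε), mem_closure_iff.1 hx U hU hxU,
      inter_subset_left, hU.inter isOpen_interior,
      fun y hy ↦ Metric.mem_ball.1 (interior_subset hy.2 :)⟩
  · intro hf V hV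
    obtain ⟨ε, hε, hεV⟩ := Metric.mem_nhds_iff.1 hV
    refine mem_closure_iff.2 fun U hU hxU ↦ ?_
    obtain ⟨G, ⟨y, hy⟩, hGU, hG, hGf⟩ := hf ε hε U hU hxU
    have hGV : G ⊆ f ⁻¹' V := fun z hz ↦ hεV (hGf z hz)
    exact ⟨y, hGU hy, interior_maximal hGV hG hy⟩

section SmallOscillation

variable {X Y : Type*} [TopologicalSpace X] {f : X → Y} {x : X} {V : Set (Y × Y)}

/-- The set of points at which the oscillation of `f` is at most `V`: those with a neighbourhood
on which any two values of `f` are `V`-close. -/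
def smallOscillationSet (f : X → Y) (V : Set (Y × Y)) : Set X :=
  {x | ∀ᶠ p in 𝓝 (x, x), Prod.map f f p ∈ V}

theorem isOpen_smallOscillationSet : IsOpen (smallOscillationSet f V) :=
  isOpen_setOfPred_eventually_nhds.preimage (continuous_id.prodMk continuous_id)

variable [UniformSpace Y]

theorem continuousAt_of_forall_mem_smallOscillationSet
    (h : ∀ V ∈ 𝓤 Y, x ∈ smallOscillationSet f V) : ContinuousAt f x := by
  refine Uniform.continuousAt_iff'_right.2 fun V hV ↦ ?_
  exact (Continuous.prodMk_right x).continuousAt.eventually (h V hV)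

theorem IsQuasiContinuousAt.mem_closure_smallOscillationSet (hf : IsQuasiContinuousAt f x)
    (hV : V ∈ 𝓤 Y) : x ∈ closure (smallOscillationSet f V) := by
  obtain ⟨W, hW, hWsymm, hWV⟩ := comp_symm_mem_uniformity_sets hV
  refine closure_mono (fun y hy ↦ ?_) (hf _ (UniformSpace.ball_mem_nhds (f x) hW))
  have hball : f ⁻¹' UniformSpace.ball (f x) W ∈ 𝓝 y := mem_interior_iff_mem_nhds.1 hy
  filter_upwards [prod_mem_nhds hball hball] with p hp
  exact hWV ⟨f x, hWsymm.symm _ _ hp.1, hp.2⟩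

theorem eventually_residual_continuousAt_of_dense_isQuasiContinuousAt [(𝓤 Y).IsCountablyGenerated]
    (hf : Dense {x | IsQuasiContinuousAt f x}) : ∀ᶠ x in residual X, ContinuousAt f x := by
  obtain ⟨V, hV⟩ := (𝓤 Y).exists_antitone_basis
  have hdense (n : ℕ) : Dense (smallOscillationSet f (V n)) :=
    dense_closure.1 <| hf.mono fun _ hx ↦ hx.mem_closure_smallOscillationSet (hV.mem n)
  have hresidual : ∀ᶠ x in residual X, ∀ n, x ∈ smallOscillationSet f (V n) :=
    eventually_countable_forall.2 fun n ↦
      residual_of_dense_open isOpen_smallOscillationSet (hdense n)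
  filter_upwards [hresidual] with x hx
  refine continuousAt_of_forall_mem_smallOscillationSet fun W hW ↦ ?_
  obtain ⟨n, hn⟩ := hV.mem_iff.1 hW
  exact (hx n).mono fun _ hp ↦ hn hp

theorem quasi_continuous_has_continuity_point_general [BaireSpace X] [(𝓤 Y).IsCountablyGenerated]
    (hf : Dense {x | IsQuasiContinuousAt f x}) : Dense {x | ContinuousAt f x} :=
  dense_of_mem_residual (eventually_residual_continuousAt_of_dense_isQuasiContinuousAt hf)

end SmallOscillation

theorem QuasiContinuousAt.isQuasiContinuousAt_domRestrict {f : ℝ → ℝ} {x : Icc (0 : ℝ) 1}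
    (hf : QuasiContinuousAt f x) : IsQuasiContinuousAt ((Icc 0 1).domRestrict f) x := by
  refine isQuasiContinuousAt_iff_dist.2 fun ε hε U hU hxU ↦ ?_
  have hpre : Subtype.val ⁻¹' (Subtype.val '' U) = U := preimage_image_eq U Subtype.val_injective
  obtain ⟨G, hGne, hGU, hG, hGf⟩ := hf ε hε (Subtype.val '' U) (Subtype.coe_image_subset _ U)
    (mem_image_of_mem _ hxU) (hpre.symm ▸ hU)
  obtain ⟨V, hVU, rfl⟩ := subset_image_iff.1 hGU
  rw [preimage_image_eq V Subtype.val_injective] at hG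
  exact ⟨V, hGne.of_image, hVU, hG, fun y hy ↦ hGf y (mem_image_of_mem _ hy)⟩

theorem quasi_continuous_has_continuity_point
    (f : ℝ → ℝ) (hf : ∀ x ∈ Set.Icc (0:ℝ) 1, QuasiContinuousAt f x) :
    ∃ x ∈ Set.Icc (0:ℝ) 1, ContinuousWithinAt f (Set.Icc 0 1) x := by
  have hdense : Dense {x | IsQuasiContinuousAt ((Icc 0 1).domRestrict f) x} :=
    dense_univ.mono fun x _ ↦ (hf x x.2).isQuasiContinuousAt_domRestrict
  obtain ⟨x, hx⟩ := (quasi_continuous_has_continuity_point_general hdense).nonempty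
  exact ⟨x, x.2, (continuousWithinAt_iff_continuousAt_domRestrict f x.2).2 hx⟩
end

section
/- Let A ⊆ [0,1], let Y : [0,1] → ℕ be injective on A, and let f : [0,1] → ℝ be given by f(x) = 2^{-(Y(x)+1)} if x ∈ A and f(x) = 0 otherwise. Then for every x ∈ [0,1], f is continuous at x relative to [0,1] (i.e., ContinuousWithinAt f [0,1] x) if and only if x ∉ A. In particular, any point of continuity of f lies outside A. -/
/-!
If `u i → 0` along the cofinite filter and `Y` is injective on `A`, then each neighbourhood of `0`
contains all but finitely many values of `A.indicator (u ∘ Y)`. In a T₁ space a finite set can be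
removed from a punctured neighbourhood of any point, so this function has punctured limit `0`
everywhere: at an accumulation point it is continuous exactly where it vanishes.
-/

open Filter Set Topology

lemma tendsto_cofinite_inf_principal_of_injOn {α ι : Type*} {A : Set α} {Y : α → ι}
    (hY : InjOn Y A) : Tendsto Y (cofinite ⊓ 𝓟 A) cofinite := by
  intro t ht
  have hfin : (A ∩ Y ⁻¹' tᶜ).Finite :=
    .of_finite_image (ht.subset (image_subset_iff.2 inter_subset_right))
      (hY.mono inter_subset_left)
  exact mem_inf_principal.2 <| mem_of_superset hfin.compl_mem_cofinite fun x hx hxA ↦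
    not_not.1 fun hxt ↦ hx ⟨hxA, hxt⟩

lemma tendsto_cofinite_indicator_comp_of_injOn {α ι M : Type*} [Zero M] [TopologicalSpace M]
    {A : Set α} {Y : α → ι} {u : ι → M} (hY : InjOn Y A) (hu : Tendsto u cofinite (𝓝 0)) :
    Tendsto (A.indicator (u ∘ Y)) cofinite (𝓝 0) := by
  classical
  rw [← piecewise_eq_indicator]
  exact Tendsto.if (p := (· ∈ A)) (hu.comp (tendsto_cofinite_inf_principal_of_injOn hY))
    tendsto_const_nhds

lemma continuousWithinAt_iff_eq_of_tendsto {X M : Type*} [TopologicalSpace X]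
    [TopologicalSpace M] [T2Space M] {s : Set X} {x : X} {f : X → M} {c : M}
    (hx : AccPt x (𝓟 s)) (hf : Tendsto f (𝓝[s \ {x}] x) (𝓝 c)) :
    ContinuousWithinAt f s x ↔ f x = c := by
  have : (𝓝[s \ {x}] x).NeBot := accPt_principal_iff_nhdsWithin.1 hx
  rw [← continuousWithinAt_sdiff_self]
  exact ⟨fun hcont ↦ tendsto_nhds_unique hcont hf, fun h ↦ by rwa [ContinuousWithinAt, h]⟩

theorem continuity_points_of_injection_indicator_general {X ι M : Type*} [TopologicalSpace X]
    [T1Space X] [Zero M] [TopologicalSpace M] [T2Space M] {s A : Set X} {Y : X → ι}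
    (hY : InjOn Y A) {u : ι → M} (hu₀ : ∀ i, u i ≠ 0) (hu : Tendsto u cofinite (𝓝 0))
    {f : X → M} (hf : EqOn f (A.indicator (u ∘ Y)) s) {x : X} (hxs : x ∈ s)
    (hx : AccPt x (𝓟 s)) :
    ContinuousWithinAt f s x ↔ x ∉ A := by
  have hlim : Tendsto (A.indicator (u ∘ Y)) (𝓝[s \ {x}] x) (𝓝 0) :=
    (tendsto_cofinite_indicator_comp_of_injOn hY hu).mono_left
      ((nhdsWithin_mono x fun _ hy ↦ hy.2).trans (nhdsNE_le_cofinite x))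
  calc
    ContinuousWithinAt f s x ↔ ContinuousWithinAt (A.indicator (u ∘ Y)) s x :=
      continuousWithinAt_congr hf (hf hxs)
    _ ↔ A.indicator (u ∘ Y) x = 0 := continuousWithinAt_iff_eq_of_tendsto hx hlim
    _ ↔ x ∉ A := by simp [hu₀]

lemma tendsto_zpow_neg_natCast_add_one {K : Type*} [Field K] [LinearOrder K]
    [IsStrictOrderedRing K] [Archimedean K] [TopologicalSpace K] [OrderTopology K] {a : K}
    (ha : 1 < a) : Tendsto (fun n : ℕ ↦ a ^ (-(n + 1 : ℤ))) atTop (𝓝 0) := by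
  have hpow : Tendsto (fun n : ℕ ↦ (a ^ (n + 1))⁻¹) atTop (𝓝 0) :=
    tendsto_inv_atTop_zero.comp
      ((tendsto_pow_atTop_atTop_of_one_lt ha).comp (tendsto_add_atTop_nat 1))
  exact hpow.congr fun n ↦ by rw [zpow_neg, ← Nat.cast_succ, zpow_natCast]

lemma accPt_principal_Icc {α : Type*} [ConditionallyCompleteLinearOrder α] [TopologicalSpace α]
    [OrderTopology α] [DenselyOrdered α] {a b x : α} (hab : a < b) (hx : x ∈ Icc a b) :
    AccPt x (𝓟 (Icc a b)) :=
  isPreconnected_Icc.preperfect_of_nontrivial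
    ⟨a, left_mem_Icc.2 hab.le, b, right_mem_Icc.2 hab.le, hab.ne⟩ x hx

open Classical in
theorem continuity_points_of_injection_indicator
    (A : Set ℝ) (hA : A ⊆ Set.Icc 0 1)
    (Y : ℝ → ℕ) (hY : Set.InjOn Y A)
    (f : ℝ → ℝ)
    (hf : ∀ x ∈ Set.Icc (0:ℝ) 1,
      f x = if x ∈ A then (2:ℝ) ^ (-(Y x + 1 : ℤ)) else 0) :
    ∀ x ∈ Set.Icc (0:ℝ) 1,
      (ContinuousWithinAt f (Set.Icc 0 1) x ↔ x ∉ A) := by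
  have hu : Tendsto (fun n : ℕ ↦ (2 : ℝ) ^ (-(n + 1 : ℤ))) cofinite (𝓝 0) :=
    Nat.cofinite_eq_atTop ▸ tendsto_zpow_neg_natCast_add_one one_lt_two
  intro x hx
  exact continuity_points_of_injection_indicator_general hY (fun _ ↦ by positivity) hu
    (fun y hy ↦ by rw [hf y hy, indicator_apply, Function.comp_apply]) hx
    (accPt_principal_Icc zero_lt_one hx)
end

section
/- Let A ⊆ [0,1], let Y : [0,1] → ℕ be injective on A, and let f : [0,1] → ℝ be given by f(x) = 2^{-(Y(x)+1)} if x ∈ A and f(x) = 0 otherwise. Then f is cliquish at every x₀ ∈ [0,1]. -/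
/-- `f` is cliquish at `x₀ ∈ [0,1]`: for every `ε > 0` and every set
`U ⊆ [0,1]` containing `x₀` that is open in the subspace topology of `[0,1]`,
there is a nonempty set `G ⊆ U`, open in the subspace topology of `[0,1]`,
with `|f x - f y| < ε` for all `x, y ∈ G`. -/
def CliquishAt (f : ℝ → ℝ) (x₀ : ℝ) : Prop :=
  ∀ ε > (0:ℝ), ∀ U : Set ℝ, U ⊆ Set.Icc 0 1 → x₀ ∈ U →
    IsOpen (Subtype.val ⁻¹' U : Set (Set.Icc (0:ℝ) 1)) →
    ∃ G : Set ℝ, G.Nonempty ∧ G ⊆ U ∧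
      IsOpen (Subtype.val ⁻¹' G : Set (Set.Icc (0:ℝ) 1)) ∧
      ∀ x ∈ G, ∀ y ∈ G, |f x - f y| < ε

/-!
Since `Y` takes each value at most once on `A` and `2 ^ (-(n + 1))` tends to `0`, for each `ε > 0`
only finitely many points of `[0,1]` satisfy `f x ≥ ε`. In a T1 space, removing finitely many points
from an open neighbourhood of a non-isolated point leaves a nonempty open set; at an isolated point
the singleton is itself an open set on which `f` has no oscillation.
-/

open Filter Set Topology

/-- Cliquishness at a point for maps from a topological space to a pseudometric space; `CliquishAt`
is this notion for the restriction of a real function to the subspace `[0,1]`. -/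
def IsCliquishAt {X E : Type*} [TopologicalSpace X] [PseudoMetricSpace E] (f : X → E) (x₀ : X) :
    Prop :=
  ∀ ε > 0, ∀ U : Set X, IsOpen U → x₀ ∈ U →
    ∃ G ⊆ U, IsOpen G ∧ G.Nonempty ∧ ∀ x ∈ G, ∀ y ∈ G, dist (f x) (f y) < ε

theorem cliquishAt_iff_isCliquishAt_domRestrict {f : ℝ → ℝ} {x₀ : Icc (0 : ℝ) 1} :
    CliquishAt f x₀ ↔ IsCliquishAt ((Icc 0 1).domRestrict f) x₀ := by
  constructor
  · intro hf ε hε U hU hx₀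
    obtain ⟨G, ⟨x, hx⟩, hGU, hG, hfG⟩ := hf ε hε (Subtype.val '' U) (Subtype.coe_image_subset _ U)
      (mem_image_of_mem _ hx₀) (by rwa [preimage_image_eq _ Subtype.val_injective])
    refine ⟨Subtype.val ⁻¹' G, ?_, hG, ?_, fun x hx y hy => hfG x hx y hy⟩
    · exact (preimage_mono hGU).trans (preimage_image_eq U Subtype.val_injective).subset
    · exact ⟨⟨x, Subtype.coe_image_subset _ U (hGU hx)⟩, hx⟩
  · intro hf ε hε U _ hx₀ hU
    obtain ⟨G, hGU, hG, hne, hfG⟩ := hf ε hε _ hU hx₀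
    refine ⟨Subtype.val '' G, hne.image _, image_subset_iff.2 hGU, ?_, ?_⟩
    · rwa [preimage_image_eq _ Subtype.val_injective]
    · rintro _ ⟨x, hx, rfl⟩ _ ⟨y, hy, rfl⟩
      exact hfG x hx y hy

section Topology

variable {X E : Type*} [TopologicalSpace X] [PseudoMetricSpace E] {f : X → E} {x₀ : X}

theorem isCliquishAt_of_isOpen_singleton (hx₀ : IsOpen {x₀}) : IsCliquishAt f x₀ := by
  intro ε hε U _ hx₀U
  refine ⟨{x₀}, singleton_subset_iff.2 hx₀U, hx₀, singleton_nonempty x₀, ?_⟩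
  rintro x rfl y rfl
  rwa [dist_self]

theorem isCliquishAt_of_tendsto_cofinite [T1Space X] {c : E} (hf : Tendsto f cofinite (𝓝 c)) :
    IsCliquishAt f x₀ := by
  by_cases hx₀ : IsOpen {x₀}
  · exact isCliquishAt_of_isOpen_singleton hx₀
  have : (𝓝[≠] x₀).NeBot := neBot_iff.2 (mt (isOpen_singleton_iff_punctured_nhds x₀).2 hx₀)
  intro ε hε U hU hx₀U
  have hfar : {x | ¬dist (f x) c < ε / 2}.Finite :=
    Metric.tendsto_nhds.1 hf _ (half_pos hε)
  refine ⟨U \ {x | ¬dist (f x) c < ε / 2}, sdiff_subset, hU.sdiff hfar.isClosed,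
    ((infinite_of_mem_nhds x₀ (hU.mem_nhds hx₀U)).sdiff hfar).nonempty, ?_⟩
  rintro x ⟨-, hx⟩ y ⟨-, hy⟩
  calc dist (f x) (f y) ≤ dist (f x) c + dist (f y) c := dist_triangle_right _ _ _
    _ < ε / 2 + ε / 2 := add_lt_add (not_not.1 hx) (not_not.1 hy)
    _ = ε := add_halves ε

end Topology

section FiniteFibers

variable {α ι : Type*} {A : Set α} {Y : α → ι}

theorem tendsto_cofinite_inf_principal_of_finite_fibers (hY : ∀ i, (A ∩ Y ⁻¹' {i}).Finite) :
    Tendsto Y (cofinite ⊓ 𝓟 A) cofinite := by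
  refine le_cofinite_iff_eventually_ne.2 fun i => eventually_map.2 (eventually_inf_principal.2 ?_)
  filter_upwards [(hY i).eventually_cofinite_notMem] with x hx hxA hYx using hx ⟨hxA, hYx⟩

theorem tendsto_indicator_cofinite_of_finite_fibers {E : Type*} [TopologicalSpace E] [Zero E]
    {u : ι → E} (hY : ∀ i, (A ∩ Y ⁻¹' {i}).Finite) (hu : Tendsto u cofinite (𝓝 0)) :
    Tendsto (A.indicator (u ∘ Y)) cofinite (𝓝 0) := by
  rw [← tendsto_inf_principal_nhds_iff_of_forall_eq fun x hx => indicator_of_notMem hx (u ∘ Y)]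
  have huY : Tendsto (u ∘ Y) (cofinite ⊓ 𝓟 A) (𝓝 0) :=
    hu.comp (tendsto_cofinite_inf_principal_of_finite_fibers hY)
  exact huY.congr' <|
    eqOn_indicator.symm.eventuallyEq_of_mem (mem_inf_of_right (mem_principal_self A))

theorem finite_inter_preimage_singleton_of_injOn (hY : InjOn Y A) (i : ι) :
    (A ∩ Y ⁻¹' {i}).Finite :=
  Set.Subsingleton.finite fun _ hx _ hy => hY hx.1 hy.1 (hx.2.trans hy.2.symm)

end FiniteFibers

theorem tendsto_zpow_neg_add_one_cofinite_nhds_zero {𝕜 : Type*} [NormedDivisionRing 𝕜] {r : 𝕜}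
    (hr : 1 < ‖r‖) :
    Tendsto (fun n : ℕ => r ^ (-(n + 1 : ℤ))) cofinite (𝓝 0) := by
  rw [Nat.cofinite_eq_atTop]
  have hinv : ‖r⁻¹‖ < 1 := by rw [norm_inv]; exact inv_lt_one_of_one_lt₀ hr
  refine ((tendsto_pow_atTop_nhds_zero_of_norm_lt_one hinv).comp (tendsto_add_atTop_nat 1)).congr
    fun n => ?_
  rw [Function.comp_apply, inv_pow, zpow_neg, ← Nat.cast_succ, zpow_natCast]

theorem injection_indicator_cliquish_general {X ι E : Type*} [TopologicalSpace X] [T1Space X]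
    [PseudoMetricSpace E] [Zero E] {A : Set X} {Y : X → ι} {u : ι → E}
    (hY : ∀ i, (A ∩ Y ⁻¹' {i}).Finite) (hu : Tendsto u cofinite (𝓝 0)) (x₀ : X) :
    IsCliquishAt (A.indicator (u ∘ Y)) x₀ :=
  isCliquishAt_of_tendsto_cofinite (tendsto_indicator_cofinite_of_finite_fibers hY hu)

open Classical in
theorem injection_indicator_cliquish
    (A : Set ℝ) (hA : A ⊆ Set.Icc 0 1)
    (Y : ℝ → ℕ) (hY : Set.InjOn Y A)
    (f : ℝ → ℝ)
    (hf : ∀ x ∈ Set.Icc (0:ℝ) 1,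
      f x = if x ∈ A then (2:ℝ) ^ (-(Y x + 1 : ℤ)) else 0) :
    ∀ x₀ ∈ Set.Icc (0:ℝ) 1, CliquishAt f x₀ := by
  intro x₀ hx₀
  have hf_indicator : (Icc 0 1).domRestrict f =
      (Subtype.val ⁻¹' A).indicator
        ((fun n : ℕ => (2 : ℝ) ^ (-(n + 1 : ℤ))) ∘ Y ∘ Subtype.val) := by
    ext x
    simp only [domRestrict_apply, hf x x.2, indicator_apply, mem_preimage, Function.comp_apply]
  have hY_fibers := finite_inter_preimage_singleton_of_injOn
    (hY.comp Subtype.val_injective.injOn (mapsTo_preimage (Subtype.val : Icc (0 : ℝ) 1 → ℝ) A))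
  have hweights := tendsto_zpow_neg_add_one_cofinite_nhds_zero (r := (2 : ℝ)) (by norm_num)
  rw [cliquishAt_iff_isCliquishAt_domRestrict (x₀ := ⟨x₀, hx₀⟩), hf_indicator]
  exact injection_indicator_cliquish_general hY_fibers hweights _
end

section
/- Let A ⊆ [0,1], let Y : [0,1] → ℕ be injective on A, and let f : [0,1] → ℝ be given by f(x) = 2^{-(Y(x)+1)} if x ∈ A and f(x) = 0 otherwise. Then f equals its own oscillation function: for every x ∈ [0,1], the sequence k ↦ sSup (f '' ([0,1] ∩ B(x, 2^{-k}))) − sInf (f '' ([0,1] ∩ B(x, 2^{-k}))) converges to f(x) as k → ∞, where B(x, r) denotes the open ball of radius r around x. -/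
/-! Since `Y` is injective on `A`, `f` tends to `0` along the cofinite filter of `[0, 1]`, hence
also at every point `x` of `[0, 1]` once `x` itself is left out. As `0 ≤ f` and `[0, 1]` has no
isolated point, the infimum of `f` over each ball around `x` is `0`, while the suprema decrease to
`f x` as the balls shrink. -/

section Oscillation

open Filter Topology Set Metric

variable {X : Type*}

/-- The oscillation of `f : X → ℝ` over the part of `S` in the open ball of radius `r` around `x`;
its limit as `r → 0` is the oscillation of `f` at `x` relative to `S`. It is meaningful only where
`f` is bounded on that part, since `sSup` and `sInf` of an unbounded set of reals are junk. -/
noncomputable def ballOscillation [PseudoMetricSpace X] (f : X → ℝ) (S : Set X) (x : X) (r : ℝ) :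
    ℝ :=
  sSup (f '' (S ∩ ball x r)) - sInf (f '' (S ∩ ball x r))

theorem tendsto_sSup_image_inter_ball [PseudoMetricSpace X] {β : Type*}
    [ConditionallyCompleteLinearOrder β] [DenselyOrdered β] [NoMaxOrder β] [TopologicalSpace β]
    [OrderTopology β] {f : X → β} {S : Set X} {x : X} (hf : UpperSemicontinuousWithinAt f S x)
    (hx : x ∈ S) : Tendsto (fun r : ℝ => sSup (f '' (S ∩ ball x r))) (𝓝[>] 0) (𝓝 (f x)) := by
  have hmem : ∀ r > 0, f x ∈ f '' (S ∩ ball x r) := fun r hr =>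
    mem_image_of_mem f ⟨hx, mem_ball_self hr⟩
  have hupper : ∀ b > f x, ∀ᶠ r in 𝓝[>] (0 : ℝ), b ∈ upperBounds (f '' (S ∩ ball x r)) := by
    intro b hb
    obtain ⟨δ, hδ, hball⟩ := mem_nhdsWithin_iff.1 (hf b hb)
    filter_upwards [Ioo_mem_nhdsGT hδ] with r hr
    rintro _ ⟨y, ⟨hyS, hyr⟩, rfl⟩
    exact (hball ⟨ball_subset_ball hr.2.le hyr, hyS⟩).le
  refine tendsto_order.2 ⟨fun a ha => ?_, fun b hb => ?_⟩
  · obtain ⟨c, hxc⟩ := exists_gt (f x)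
    filter_upwards [hupper c hxc, self_mem_nhdsWithin] with r hc hr
    exact ha.trans_le (le_csSup ⟨c, hc⟩ (hmem r hr))
  · obtain ⟨c, hxc, hcb⟩ := exists_between hb
    filter_upwards [hupper c hxc, self_mem_nhdsWithin] with r hc hr
    exact (csSup_le ⟨_, hmem r hr⟩ hc).trans_lt hcb

theorem sInf_image_eq_of_tendsto {α β : Type*} [ConditionallyCompleteLattice β]
    [TopologicalSpace β] [ClosedIciTopology β] {f : α → β} {l : Filter α} [l.NeBot] {T : Set α}
    {c : β} (hT : T ∈ l) (hc : c ∈ lowerBounds (f '' T)) (hf : Tendsto f l (𝓝 c)) :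
    sInf (f '' T) = c := by
  have hglb : IsGLB (f '' T) c := ⟨hc, fun b hb =>
    ge_of_tendsto hf (mem_of_superset hT fun y hy => hb (mem_image_of_mem f hy))⟩
  exact hglb.csInf_eq ((Filter.nonempty_of_mem hT).image f)

theorem upperSemicontinuousWithinAt_of_tendsto_sdiff_singleton {β : Type*} [TopologicalSpace X]
    [LinearOrder β] [TopologicalSpace β] [ClosedIciTopology β] {f : X → β} {S : Set X} {x : X}
    {c : β} (hf : Tendsto f (𝓝[S \ {x}] x) (𝓝 c)) (hc : c ≤ f x) :
    UpperSemicontinuousWithinAt f S x := by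
  intro b hb
  have hoff := eventually_nhdsWithin_iff.1 (hf.eventually_lt_const (hc.trans_lt hb))
  filter_upwards [nhdsWithin_le_nhds hoff, self_mem_nhdsWithin] with y hy hyS
  obtain rfl | hyx := eq_or_ne y x
  · exact hb
  · exact hy ⟨hyS, hyx⟩

theorem tendsto_ballOscillation_of_tendsto_zero [PseudoMetricSpace X] {f : X → ℝ} {S : Set X}
    {x : X} (hx : x ∈ S) (hacc : AccPt x (𝓟 S)) (hnonneg : ∀ y ∈ S, 0 ≤ f y)
    (hf : Tendsto f (𝓝[S \ {x}] x) (𝓝 0)) :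
    Tendsto (ballOscillation f S x) (𝓝[>] 0) (𝓝 (f x)) := by
  have : (𝓝[S \ {x}] x).NeBot := accPt_principal_iff_nhdsWithin.1 hacc
  have hSup : Tendsto (fun r : ℝ => sSup (f '' (S ∩ ball x r))) (𝓝[>] 0) (𝓝 (f x)) :=
    tendsto_sSup_image_inter_ball
      (upperSemicontinuousWithinAt_of_tendsto_sdiff_singleton hf (hnonneg x hx)) hx
  refine hSup.congr' ?_
  filter_upwards [self_mem_nhdsWithin] with r hr
  have hball : S ∩ ball x r ∈ 𝓝[S \ {x}] x :=
    inter_mem (mem_of_superset self_mem_nhdsWithin sdiff_subset)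
      (mem_nhdsWithin_of_mem_nhds (ball_mem_nhds x hr))
  have hInf : sInf (f '' (S ∩ ball x r)) = 0 :=
    sInf_image_eq_of_tendsto hball (forall_mem_image.2 fun y hy => hnonneg y hy.1) hf
  rw [ballOscillation, hInf, sub_zero]

theorem nhdsWithin_sdiff_singleton_le_cofinite_inf_principal [TopologicalSpace X] [T1Space X]
    (S : Set X) (x : X) : 𝓝[S \ {x}] x ≤ cofinite ⊓ 𝓟 S :=
  le_inf ((nhdsWithin_mono x fun _ hy => hy.2).trans (nhdsNE_le_cofinite x))
    (le_principal_iff.2 (mem_of_superset self_mem_nhdsWithin sdiff_subset))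

theorem tendsto_cofinite_of_injOn {α ι : Type*} {Y : α → ι} {A : Set α} (hY : InjOn Y A) :
    Tendsto Y (cofinite ⊓ 𝓟 A) cofinite := by
  refine le_cofinite_iff_eventually_ne.2 fun i => ?_
  have hfiber : {y ∈ A | Y y = i}.Subsingleton := fun y hy z hz =>
    hY hy.1 hz.1 (hy.2.trans hz.2.symm)
  rw [eventually_map, eventually_inf_principal]
  filter_upwards [hfiber.finite.eventually_cofinite_notMem] with y hy hyA hyi
  exact hy ⟨hyA, hyi⟩

theorem tendsto_ite_cofinite_of_injOn {α ι β : Type*} [TopologicalSpace β] [Zero β] {S A : Set α}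
    [DecidablePred (· ∈ A)] {Y : α → ι} (hY : InjOn Y (A ∩ S)) {w : ι → β}
    (hw : Tendsto w cofinite (𝓝 0)) :
    Tendsto (fun y => if y ∈ A then w (Y y) else 0) (cofinite ⊓ 𝓟 S) (𝓝 0) := by
  refine Tendsto.if ?_ tendsto_const_nhds
  rw [inf_assoc, inf_principal, ofPred_mem_eq, inter_comm]
  exact hw.comp (tendsto_cofinite_of_injOn hY)

theorem preperfect_Icc {α : Type*} [ConditionallyCompleteLinearOrder α] [DenselyOrdered α]
    [TopologicalSpace α] [OrderTopology α] {a b : α} (hab : a < b) : Preperfect (Icc a b) :=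
  isPreconnected_Icc.preperfect_of_nontrivial
    (nontrivial_of_mem_mem_ne (left_mem_Icc.2 hab.le) (right_mem_Icc.2 hab.le) hab.ne)

theorem tendsto_two_zpow_neg_atTop :
    Tendsto (fun k : ℕ => (2 : ℝ) ^ (-(k : ℤ))) atTop (𝓝[>] 0) := by
  simp only [zpow_neg, zpow_natCast, ← inv_pow]
  exact tendsto_pow_atTop_nhdsWithin_zero_of_lt_one (by norm_num) (by norm_num)

theorem tendsto_two_zpow_neg_succ_cofinite :
    Tendsto (fun n : ℕ => (2 : ℝ) ^ (-(n + 1 : ℤ))) cofinite (𝓝 0) := by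
  rw [Nat.cofinite_eq_atTop]
  exact_mod_cast
    (tendsto_two_zpow_neg_atTop.mono_right nhdsWithin_le_nhds).comp (tendsto_add_atTop_nat 1)

theorem injection_indicator_equals_own_oscillation_general {ι : Type*} [MetricSpace X]
    {S A : Set X} (hS : Preperfect S) [DecidablePred (· ∈ A)] {Y : X → ι} (hY : InjOn Y (A ∩ S))
    {w : ι → ℝ} (hw_nonneg : ∀ i, 0 ≤ w i) (hw : Tendsto w cofinite (𝓝 0)) {f : X → ℝ}
    (hf : ∀ x ∈ S, f x = if x ∈ A then w (Y x) else 0) {x : X} (hx : x ∈ S) :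
    Tendsto (ballOscillation f S x) (𝓝[>] 0) (𝓝 (f x)) := by
  have hnonneg : ∀ y ∈ S, 0 ≤ f y := fun y hy => by
    rw [hf y hy]
    split_ifs
    exacts [hw_nonneg _, le_rfl]
  have hcofinite : Tendsto f (cofinite ⊓ 𝓟 S) (𝓝 0) :=
    (tendsto_ite_cofinite_of_injOn hY hw).congr'
      (mem_of_superset (mem_inf_of_right (mem_principal_self S)) fun y hy => (hf y hy).symm)
  exact tendsto_ballOscillation_of_tendsto_zero hx (hS x hx) hnonneg
    (hcofinite.mono_left (nhdsWithin_sdiff_singleton_le_cofinite_inf_principal S x))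

end Oscillation

open Classical in
theorem injection_indicator_equals_own_oscillation
    (A : Set ℝ) (hA : A ⊆ Set.Icc 0 1)
    (Y : ℝ → ℕ) (hY : Set.InjOn Y A)
    (f : ℝ → ℝ)
    (hf : ∀ x ∈ Set.Icc (0:ℝ) 1,
      f x = if x ∈ A then (2:ℝ) ^ (-(Y x + 1 : ℤ)) else 0) :
    ∀ x ∈ Set.Icc (0:ℝ) 1,
      Filter.Tendsto
        (fun k : ℕ =>
          sSup (f '' (Set.Icc (0:ℝ) 1 ∩ Metric.ball x ((2:ℝ) ^ (-(k:ℤ))))) -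
          sInf (f '' (Set.Icc (0:ℝ) 1 ∩ Metric.ball x ((2:ℝ) ^ (-(k:ℤ))))))
        Filter.atTop (nhds (f x)) := fun _ hx =>
  (injection_indicator_equals_own_oscillation_general (preperfect_Icc zero_lt_one)
    (hY.mono Set.inter_subset_left) (fun _ => by positivity) tendsto_two_zpow_neg_succ_cofinite hf
    hx).comp tendsto_two_zpow_neg_atTop
end

section
/- Let f : [0,1] → ℝ be upper semicontinuous on [0,1]. Then there exists x ∈ [0,1] at which f is continuous relative to [0,1] (i.e., ContinuousWithinAt f [0,1] x). -/
/-!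
An upper semicontinuous function can fail to be continuous at `x` only by failing to be lower
semicontinuous there, and then `x` lies on the boundary of a superlevel set `{z | q ≤ f z}`. Here
`q` may be taken from a countable set, and the boundary of a closed set is nowhere dense, so the
discontinuities form a meagre set, which cannot exhaust a nonempty Baire space.
-/

open Filter Set TopologicalSpace

theorem isNowhereDense_frontier_of_isClosed {X : Type*} [TopologicalSpace X] {s : Set X}
    (hs : IsClosed s) : IsNowhereDense (frontier s) :=
  isClosed_frontier.isNowhereDense_iff.2 (interior_frontier hs)

theorem exists_countable_forall_lt_exists_mem_Ioc (α : Type*) [LinearOrder α] [TopologicalSpace α]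
    [OrderTopology α] [SecondCountableTopology α] :
    ∃ C : Set α, C.Countable ∧ ∀ a b, a < b → ∃ q ∈ C, q ∈ Ioc a b := by
  obtain ⟨D, hD_countable, hD_dense⟩ := exists_countable_dense α
  -- A dense set misses `Ioc a b` only if `Ioo a b` is empty, so the right ends of gaps are added.
  refine ⟨D ∪ {b | ∃ a, a ⋖ b}, hD_countable.union countable_setOfPred_covBy_left,
    fun a b hab => ?_⟩
  by_cases hgap : a ⋖ b
  · exact ⟨b, .inr ⟨a, hgap⟩, hab, le_rfl⟩
  · have hIoo : (Ioo a b).Nonempty := (not_covBy_iff hab).1 hgap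
    obtain ⟨q, hq, hqD⟩ := hD_dense.inter_open_nonempty _ isOpen_Ioo hIoo
    exact ⟨q, .inl hqD, Ioo_subset_Ioc_self hq⟩

theorem lowerSemicontinuousAt_of_notMem_frontier {X α : Type*} [TopologicalSpace X] [Preorder α]
    {C : Set α} (hC : ∀ a b, a < b → ∃ q ∈ C, q ∈ Ioc a b) {f : X → α} {x : X}
    (hx : ∀ q ∈ C, x ∉ frontier (f ⁻¹' Ici q)) : LowerSemicontinuousAt f x := by
  intro y hy
  obtain ⟨q, hqC, hyq, hqx⟩ := hC y (f x) hy
  have hmem : x ∈ f ⁻¹' Ici q := hqx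
  have hint : x ∈ interior (f ⁻¹' Ici q) := (mem_interior_iff_notMem_frontier hmem).2 (hx q hqC)
  filter_upwards [mem_interior_iff_mem_nhds.1 hint] with z hz
  exact hyq.trans_le hz

section

variable {X α : Type*} [TopologicalSpace X] [LinearOrder α] [TopologicalSpace α]
  [OrderTopology α] [SecondCountableTopology α]

theorem eventually_residual_continuousAt_of_upperSemicontinuous {f : X → α}
    (hf : UpperSemicontinuous f) : ∀ᶠ x in residual X, ContinuousAt f x := by
  obtain ⟨C, hC_countable, hC⟩ := exists_countable_forall_lt_exists_mem_Ioc α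
  have hfrontier : ∀ᶠ x in residual X, ∀ q ∈ C, x ∉ frontier (f ⁻¹' Ici q) :=
    (eventually_countable_ball hC_countable).2 fun q _ =>
      (isNowhereDense_frontier_of_isClosed (hf.isClosed_preimage q)).isMeagre
  filter_upwards [hfrontier] with x hx
  exact continuousAt_iff_lower_upperSemicontinuousAt.2
    ⟨lowerSemicontinuousAt_of_notMem_frontier hC hx, hf x⟩

theorem usco_has_continuity_point_general {s : Set X} [BaireSpace s] (hs : s.Nonempty) {f : X → α}
    (hf : UpperSemicontinuousOn f s) : ∃ x ∈ s, ContinuousWithinAt f s x := by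
  have hrestrict : UpperSemicontinuous (s.domRestrict f) := upperSemicontinuousOn_iff_restrict.2 hf
  have : Nonempty s := hs.to_subtype
  obtain ⟨x, hx⟩ := (dense_of_mem_residual
    (eventually_residual_continuousAt_of_upperSemicontinuous hrestrict)).nonempty
  exact ⟨x, x.2, (continuousWithinAt_iff_continuousAt_domRestrict f x.2).2 hx⟩

end

theorem usco_has_continuity_point
    (f : ℝ → ℝ) (hf : UpperSemicontinuousOn f (Set.Icc 0 1)) :
    ∃ x ∈ Set.Icc (0:ℝ) 1, ContinuousWithinAt f (Set.Icc 0 1) x :=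
  usco_has_continuity_point_general (nonempty_Icc.2 zero_le_one) hf
end
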